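/- Brascamp–Lieb variance inequality: There exists a constant C > 0 depending only on a_V and A_V such that for every finite connected graph G = (V ∪ ∂V, E) with distinguished nonempty set ∂V, every boundary condition ψ : ∂V → ℝ, and every ν ∈ ℝ^V, the variance of ⟨ν, h⟩ = Σ_{x∈V} ν(x) h(x) when h is distributed according to the GL measure P^ψ is at most C times the variance of ⟨ν, h*⟩ when h* is distributed according to the zero-boundary discrete Gaussian free field on G with unit weights. -/

import Mathlib

/-!
The constant is `C = 1 / a_V`. Let `ℰ` be the Dirichlet form of the graph with zero boundary
condition, and let `g` represent the functional `⟨ν, ·⟩`, that is `ℰ(g, ·) = ⟨ν, ·⟩`; it exists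
since `ℰ` is definite on a connected graph with nonempty boundary.

The field `h*` has energy `ℰ / 2`, so shifting by `t g` and completing the square shows that
`⟨ν, h*⟩` has moment generating function `exp (t² ℰ(g, g) / 2)`, hence variance `ℰ(g, g)`
(`variance_eq_of_shift`).

For the GL measure, `V'' ≥ a_V` gives the midpoint bound
`H(x) + H(y) - 2 H((x + y) / 2) ≥ (a_V / 4) ℰ(x - y, x - y)` (`midpoint_energy`), and the right-hand
side is at least `t ⟨ν, x - y⟩ - t² ℰ(g, g) / a_V` for every `t`. The Prékopa–Leindler inequality
(`prekopaLeindler_pi`: Brunn–Minkowski on the line, the layer cake formula, and tensorisation) then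
yields `E[exp (t ⟨ν, h⟩)] E[exp (-t ⟨ν, h⟩)] ≤ exp (t² ℰ(g, g) / a_V)`. Letting `t → 0` gives
`Var ⟨ν, h⟩ ≤ ℰ(g, g) / a_V` (`variance_le_of_mgf_mul_mgf_neg_le`, `variance_le_of_midpoint`).
-/

open MeasureTheory ProbabilityTheory Real
open scoped ENNReal NNReal Classical

noncomputable section

/-- `h ∨ ψ`: the field `h` on the interior `V = (∂V)ᶜ` extended by `ψ` on the boundary `∂V = B`. -/
def gvee {α : Type*} [DecidableEq α] (B : Finset α) (h : {x // x ∉ B} → ℝ) (ψ : α → ℝ) :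
    α → ℝ :=
  fun x => if hx : x ∉ B then h ⟨x, hx⟩ else ψ x

/-- GL Hamiltonian `∑_{b ∈ E} V(∇(h∨ψ)(b))` on a graph (each undirected edge counted once,
which for even `V` agrees with half the sum over ordered adjacent pairs). -/
def graphGLEnergy {α : Type*} [Fintype α] [DecidableEq α] (V : ℝ → ℝ)
    (G : SimpleGraph α) [DecidableRel G.Adj] (B : Finset α) (ψ : α → ℝ)
    (h : {x // x ∉ B} → ℝ) : ℝ :=
  (1 / 2) * ∑ x : α, ∑ y : α, if G.Adj x y then V (gvee B h ψ y - gvee B h ψ x) else 0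

/-- `P` is the GL measure on the graph `G` with boundary set `B`, potential `V` and boundary
condition `ψ`: a probability measure proportional to `exp(−H) dh` on `ℝ^V`. -/
def IsGraphGL {α : Type*} [Fintype α] [DecidableEq α] (V : ℝ → ℝ)
    (G : SimpleGraph α) [DecidableRel G.Adj] (B : Finset α) (ψ : α → ℝ)
    (P : Measure ({x // x ∉ B} → ℝ)) : Prop :=
  IsProbabilityMeasure P ∧ ∃ c : ℝ≥0∞, c ≠ 0 ∧ c ≠ ⊤ ∧
    P = c • (volume.withDensity fun h => ENNReal.ofReal (Real.exp (-(graphGLEnergy V G B ψ h))))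

/-- DGFF Hamiltonian `(1/2) ∑_{b ∈ E} ω(b) (∇(h∨φ)(b))²` on a weighted graph. -/
def graphDGFFEnergy {α : Type*} [Fintype α] [DecidableEq α]
    (G : SimpleGraph α) [DecidableRel G.Adj] (B : Finset α) (w : α → α → ℝ) (φ : α → ℝ)
    (h : {x // x ∉ B} → ℝ) : ℝ :=
  (1 / 4) * ∑ x : α, ∑ y : α,
    if G.Adj x y then w x y * (gvee B h φ y - gvee B h φ x) ^ 2 else 0

/-- `P` is the discrete Gaussian free field on the weighted graph `(G, w)` with boundary set `B`
and boundary condition `φ`. -/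
def IsGraphDGFF {α : Type*} [Fintype α] [DecidableEq α]
    (G : SimpleGraph α) [DecidableRel G.Adj] (B : Finset α) (w : α → α → ℝ) (φ : α → ℝ)
    (P : Measure ({x // x ∉ B} → ℝ)) : Prop :=
  IsProbabilityMeasure P ∧ ∃ c : ℝ≥0∞, c ≠ 0 ∧ c ≠ ⊤ ∧
    P = c • (volume.withDensity fun h =>
      ENNReal.ofReal (Real.exp (-(graphDGFFEnergy G B w φ h))))

/-! ### The Prékopa–Leindler inequality at the midpoint -/

open scoped Pointwise in
/-- One-dimensional Brunn–Minkowski: `A + B` contains the translates `A + min B` and `max A + B`,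
which meet in a single point. -/
theorem volume_add_le_compact {A B : Set ℝ} (hA : IsCompact A) (hB : IsCompact B)
    (hA' : A.Nonempty) (hB' : B.Nonempty) : volume A + volume B ≤ volume (A + B) := by
  set a := sSup A
  set b := sInf B
  have ha : a ∈ A := hA.sSup_mem hA'
  have hb : b ∈ B := hB.sInf_mem hB'
  have h1 : volume (Set.image (fun x => x + b) A) = volume A := by
    simp [Set.image_add_right, measure_preimage_add_right]
  have h2 : volume (Set.image (fun x => a + x) B) = volume B := by
    simp [Set.image_add_left, measure_preimage_add]
  have hdisj : AEDisjoint volume (Set.image (fun x => x + b) A) (Set.image (fun x => a + x) B) := by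
    refine measure_mono_null (t := {a + b}) ?_ (by simp)
    rintro z ⟨⟨x, hx, rfl⟩, ⟨y, hy, hxy⟩⟩
    have h3 : x ≤ a := le_csSup hA.bddAbove hx
    have h4 : b ≤ y := csInf_le hB.bddBelow hy
    simp only [Set.mem_singleton_iff] at *
    linarith
  have hBm : NullMeasurableSet (Set.image (fun x => a + x) B) volume :=
    (hB.image (by fun_prop)).measurableSet.nullMeasurableSet
  rw [← h1, ← h2, ← measure_union₀ hBm hdisj]
  apply measure_mono
  rintro z (⟨x, hx, rfl⟩ | ⟨y, hy, rfl⟩)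
  · exact Set.add_mem_add hx hb
  · exact Set.add_mem_add ha hy

open scoped Pointwise in
theorem volume_midpoint {A B C : Set ℝ} (hA : MeasurableSet A) (hB : MeasurableSet B)
    (hA' : A.Nonempty) (hB' : B.Nonempty)
    (h : ∀ x ∈ A, ∀ y ∈ B, (1 / 2 : ℝ) • (x + y) ∈ C) :
    volume A + volume B ≤ 2 * volume C := by
  obtain ⟨x₀, hx₀⟩ := hA'
  obtain ⟨y₀, hy₀⟩ := hB'
  rw [hA.measure_eq_iSup_isCompact, hB.measure_eq_iSup_isCompact]
  simp_rw [iSup_and']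
  refine ENNReal.biSup_add_biSup_le' ⟨∅, by simp⟩ ⟨∅, by simp⟩ ?_
  rintro K ⟨hKA, hK⟩ L ⟨hLB, hL⟩
  have hK' : insert x₀ K ⊆ A := Set.insert_subset hx₀ hKA
  have hL' : insert y₀ L ⊆ B := Set.insert_subset hy₀ hLB
  calc volume K + volume L ≤ volume (insert x₀ K) + volume (insert y₀ L) :=
        add_le_add (measure_mono (Set.subset_insert _ _)) (measure_mono (Set.subset_insert _ _))
    _ ≤ volume (insert x₀ K + insert y₀ L) :=
        volume_add_le_compact (hK.insert _) (hL.insert _) (by simp) (by simp)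
    _ ≤ volume ((2 : ℝ) • C) := by
        apply measure_mono
        rintro z ⟨x, hx, y, hy, rfl⟩
        exact ⟨_, h x (hK' hx) y (hL' hy), by simp⟩
    _ = 2 * volume C := by
        rw [Measure.addHaar_smul]; simp

/-- For suprema equal to `1`, all level sets at heights below `1` are nonempty, and the layer cake
formula reduces the inequality to `volume_midpoint`. -/
theorem pl_real_normalized {f g h : ℝ → ℝ} (hf : Measurable f) (hg : Measurable g)
    (hh : Measurable h) (hf0 : ∀ x, 0 ≤ f x) (hg0 : ∀ x, 0 ≤ g x) (hh0 : ∀ x, 0 ≤ h x)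
    (hf1 : ∀ x, f x ≤ 1) (hg1 : ∀ x, g x ≤ 1)
    (hfs : ∀ s < 1, ∃ x, s < f x) (hgs : ∀ s < 1, ∃ x, s < g x)
    (H : ∀ x y, f x * g y ≤ h ((1 / 2 : ℝ) • (x + y)) ^ 2) :
    (∫⁻ x, ENNReal.ofReal (f x)) + ∫⁻ x, ENNReal.ofReal (g x) ≤
      2 * ∫⁻ x, ENNReal.ofReal (h x) := by
  have key : ∀ {φ : ℝ → ℝ}, Measurable φ → (∀ x, 0 ≤ φ x) →
      ∫⁻ x, ENNReal.ofReal (φ x) = ∫⁻ t in Set.Ioi 0, volume {a : ℝ | t < φ a} := fun h1 h2 =>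
    lintegral_eq_lintegral_meas_lt _ (.of_forall h2) h1.aemeasurable
  rw [key hf hf0, key hg hg0, key hh hh0, ← lintegral_add_left', ← lintegral_const_mul']
  rotate_left
  · simp
  · refine (Antitone.measurable ?_).aemeasurable
    intro s t hst
    exact measure_mono fun x (hx : t < f x) => lt_of_le_of_lt hst hx
  apply setLIntegral_mono' measurableSet_Ioi
  intro t ht
  rw [Set.mem_Ioi] at ht
  rcases lt_or_ge t 1 with h1 | h1
  · refine volume_midpoint (hf measurableSet_Ioi) (hg measurableSet_Ioi) (hfs t h1) (hgs t h1) ?_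
    intro x hx y hy
    change t < f x at hx
    change t < g y at hy
    change t < h _
    refine lt_of_pow_lt_pow_left₀ 2 (hh0 _) (lt_of_lt_of_le ?_ (H x y))
    nlinarith
  · have e1 : {a : ℝ | t < f a} = ∅ := by
      ext a; simpa using (hf1 a).trans h1
    have e2 : {a : ℝ | t < g a} = ∅ := by
      ext a; simpa using (hg1 a).trans h1
    simp [e1, e2]

/-- The normalised case applied to `f / sup f`, `g / sup g` and `h / √(sup f * sup g)`, followed by
the inequality of arithmetic and geometric means. -/
theorem pl_real_bounded {f g h : ℝ → ℝ} (hf : Measurable f) (hg : Measurable g)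
    (hh : Measurable h) (hf0 : ∀ x, 0 ≤ f x) (hg0 : ∀ x, 0 ≤ g x) (hh0 : ∀ x, 0 ≤ h x)
    {N : ℝ} (hf1 : ∀ x, f x ≤ N) (hg1 : ∀ x, g x ≤ N)
    (H : ∀ x y, f x * g y ≤ h ((1 / 2 : ℝ) • (x + y)) ^ 2) :
    (∫⁻ x, ENNReal.ofReal (f x)) * ∫⁻ x, ENNReal.ofReal (g x) ≤
      (∫⁻ x, ENNReal.ofReal (h x)) ^ 2 := by
  have bf : BddAbove (Set.range f) := ⟨N, by rintro _ ⟨x, rfl⟩; exact hf1 x⟩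
  have bg : BddAbove (Set.range g) := ⟨N, by rintro _ ⟨x, rfl⟩; exact hg1 x⟩
  set a := ⨆ x, f x with ha
  set b := ⨆ x, g x with hb
  have fa : ∀ x, f x ≤ a := le_ciSup bf
  have gb : ∀ x, g x ≤ b := le_ciSup bg
  have a0 : 0 ≤ a := (hf0 0).trans (fa 0)
  have b0 : 0 ≤ b := (hg0 0).trans (gb 0)
  rcases a0.eq_or_lt with a0 | a0
  · have : ∀ x, f x = 0 := fun x => le_antisymm (a0 ▸ fa x) (hf0 x)
    simp [this]
  rcases b0.eq_or_lt with b0 | b0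
  · have : ∀ x, g x = 0 := fun x => le_antisymm (b0 ▸ gb x) (hg0 x)
    simp [this]
  set c := √(a * b) with hc
  have c0 : 0 < c := Real.sqrt_pos.2 (by positivity)
  have c2 : c ^ 2 = a * b := Real.sq_sqrt (by positivity)
  have := pl_real_normalized (f := fun x => f x / a) (g := fun x => g x / b)
    (h := fun x => h x / c) (by fun_prop) (by fun_prop) (by fun_prop)
    (fun x => by have := hf0 x; positivity) (fun x => by have := hg0 x; positivity)
    (fun x => by have := hh0 x; positivity)
    (fun x => (div_le_one a0).2 (fa x)) (fun x => (div_le_one b0).2 (gb x))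
    (fun s hs => by
      obtain ⟨x, hx⟩ := exists_lt_of_lt_ciSup (show s * a < ⨆ x, f x by nlinarith)
      exact ⟨x, (lt_div_iff₀ a0).2 hx⟩)
    (fun s hs => by
      obtain ⟨x, hx⟩ := exists_lt_of_lt_ciSup (show s * b < ⨆ x, g x by nlinarith)
      exact ⟨x, (lt_div_iff₀ b0).2 hx⟩)
    (fun x y => by
      rw [div_pow, c2, div_mul_div_comm]
      exact div_le_div_of_nonneg_right (H x y) (by positivity))
  have sc : ∀ (φ : ℝ → ℝ) {d : ℝ}, 0 < d → ∫⁻ x, ENNReal.ofReal (φ x) =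
      ENNReal.ofReal d * ∫⁻ x, ENNReal.ofReal (φ x / d) := by
    intro φ d hd
    rw [← lintegral_const_mul' _ _ (by simp)]
    refine lintegral_congr fun x => ?_
    rw [← ENNReal.ofReal_mul hd.le, mul_div_cancel₀ _ hd.ne']
  rw [sc f a0, sc g b0, sc h c0]
  generalize ∫⁻ x, ENNReal.ofReal (f x / a) = F at *
  generalize ∫⁻ x, ENNReal.ofReal (g x / b) = G at *
  generalize ∫⁻ x, ENNReal.ofReal (h x / c) = K at *
  have e : ENNReal.ofReal c ^ 2 = ENNReal.ofReal a * ENNReal.ofReal b := by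
    rw [← ENNReal.ofReal_pow c0.le, c2, ENNReal.ofReal_mul a0.le]
  have amgm : F * G ≤ K ^ 2 := by
    by_cases hK : K = ⊤
    · simp [hK]
    have hF : F ≠ ⊤ := ne_top_of_le_ne_top (by finiteness) (le_self_add.trans this)
    have hG : G ≠ ⊤ := ne_top_of_le_ne_top (by finiteness) (le_add_self.trans this)
    lift F to ℝ≥0 using hF
    lift G to ℝ≥0 using hG
    lift K to ℝ≥0 using hK
    norm_cast at this ⊢
    rw [← NNReal.coe_le_coe] at this ⊢
    push_cast at this ⊢
    nlinarith [sq_nonneg ((F : ℝ) - G), F.2, G.2, K.2]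
  calc _ = ENNReal.ofReal a * ENNReal.ofReal b * (F * G) := by ring
    _ ≤ ENNReal.ofReal a * ENNReal.ofReal b * K ^ 2 := by gcongr
    _ = _ := by rw [mul_pow, e]

/-- The measure `μ` satisfies the Prékopa–Leindler inequality with weights `1/2`, `1/2`, in
squared form and for `[0, ∞]`-valued functions, so that no integrability is assumed. -/
def PrekopaLeindler {E : Type*} [AddCommGroup E] [Module ℝ E] [MeasurableSpace E]
    (μ : Measure E) : Prop :=
  ∀ f g h : E → ℝ≥0∞, Measurable f → Measurable g → Measurable h →
    (∀ x y, f x * g y ≤ h ((1 / 2 : ℝ) • (x + y)) ^ 2) →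
    (∫⁻ x, f x ∂μ) * ∫⁻ x, g x ∂μ ≤ (∫⁻ x, h x ∂μ) ^ 2

theorem prekopaLeindler_real : PrekopaLeindler (volume : Measure ℝ) := by
  intro f g h hf hg hh H
  have trunc : ∀ {φ : ℝ → ℝ≥0∞}, Measurable φ →
      ∫⁻ x, φ x = ⨆ n : ℕ, ∫⁻ x, min (φ x) n := by
    intro φ hφ
    rw [← lintegral_iSup (fun n => hφ.min measurable_const)]
    · refine lintegral_congr fun x => ?_
      rw [← inf_iSup_eq, ENNReal.iSup_natCast]
      simp
    · intro m n hmn x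
      exact min_le_min_left _ (by exact_mod_cast hmn)
  have mono : ∀ φ : ℝ → ℝ≥0∞, Monotone fun n : ℕ => ∫⁻ x, min (φ x) n := fun φ m n hmn =>
    lintegral_mono fun x => min_le_min_left _ (by exact_mod_cast hmn)
  rw [trunc hf, trunc hg, ENNReal.iSup_mul]
  refine iSup_le fun k => ?_
  rw [ENNReal.mul_iSup]
  refine iSup_le fun m => ?_
  obtain ⟨n, hkn, hmn⟩ : ∃ n, k ≤ n ∧ m ≤ n := ⟨max k m, le_max_left _ _, le_max_right _ _⟩
  refine (mul_le_mul' (mono f hkn) (mono g hmn)).trans ?_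
  have fin : ∀ a : ℝ≥0∞, min a (n : ℝ≥0∞) ≠ ⊤ := fun a =>
    ne_top_of_le_ne_top (ENNReal.natCast_ne_top n) (min_le_right _ _)
  have conv : ∀ φ : ℝ → ℝ≥0∞, ∫⁻ x, min (φ x) n =
      ∫⁻ x, ENNReal.ofReal ((min (φ x) n).toReal) := fun φ =>
    lintegral_congr fun x => (ENNReal.ofReal_toReal (fin _)).symm
  have bd : ∀ a : ℝ≥0∞, (min a (n : ℝ≥0∞)).toReal ≤ n := fun a =>
    ENNReal.toReal_le_of_le_ofReal (by positivity) (by simp)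
  calc _ ≤ (∫⁻ x, min (h x) n) ^ 2 := by
        beta_reduce
        rw [conv f, conv g, conv h]
        refine pl_real_bounded (N := n) (by fun_prop) (by fun_prop) (by fun_prop)
          (fun _ => ENNReal.toReal_nonneg) (fun _ => ENNReal.toReal_nonneg)
          (fun _ => ENNReal.toReal_nonneg) (fun _ => bd _) (fun _ => bd _) fun x y => ?_
        rw [← ENNReal.toReal_mul, ← ENNReal.toReal_pow]
        refine ENNReal.toReal_mono (ENNReal.pow_ne_top (fin _)) ?_
        rcases le_total (h ((1 / 2 : ℝ) • (x + y))) n with hn | hn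
        · rw [min_eq_left hn]
          exact (mul_le_mul' (min_le_left _ _) (min_le_left _ _)).trans (H x y)
        · rw [min_eq_right hn, sq]
          exact mul_le_mul' (min_le_right _ _) (min_le_right _ _)
    _ ≤ _ := by gcongr; exact min_le_left _ _

/-- Tensorisation: the inequality on the fibres makes the fibre integrals satisfy the hypothesis of
the inequality on the base. -/
theorem PrekopaLeindler.prod {E F : Type*} [AddCommGroup E] [Module ℝ E] [MeasurableSpace E]
    [AddCommGroup F] [Module ℝ F] [MeasurableSpace F] {μ : Measure E} {ν : Measure F}
    [SFinite ν] (hμ : PrekopaLeindler μ) (hν : PrekopaLeindler ν) :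
    PrekopaLeindler (μ.prod ν) := by
  intro f g h hf hg hh H
  rw [lintegral_prod _ hf.aemeasurable, lintegral_prod _ hg.aemeasurable,
    lintegral_prod _ hh.aemeasurable]
  refine hμ _ _ _ hf.lintegral_prod_right' hg.lintegral_prod_right' hh.lintegral_prod_right' ?_
  intro x y
  refine hν _ _ _ (by fun_prop) (by fun_prop) (by fun_prop) fun u v => ?_
  exact H (x, u) (y, v)

theorem PrekopaLeindler.of_measurePreserving {E F : Type*} [AddCommGroup E] [Module ℝ E]
    [MeasurableSpace E] [AddCommGroup F] [Module ℝ F] [MeasurableSpace F] {μ : Measure E}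
    {ν : Measure F} (hμ : PrekopaLeindler μ) {e : E → F} (he : MeasurePreserving e μ ν)
    (hlin : ∀ x y, e ((1 / 2 : ℝ) • (x + y)) = (1 / 2 : ℝ) • (e x + e y)) :
    PrekopaLeindler ν := by
  intro f g h hf hg hh H
  rw [← he.lintegral_comp hf, ← he.lintegral_comp hg, ← he.lintegral_comp hh]
  refine hμ _ _ _ (hf.comp he.measurable) (hg.comp he.measurable) (hh.comp he.measurable) ?_
  intro x y
  rw [hlin]
  exact H _ _

theorem prekopaLeindler_pi (ι : Type*) [Fintype ι] :
    PrekopaLeindler (volume : Measure (ι → ℝ)) := by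
  refine Fintype.induction_empty_option
    (P := fun ι _ => PrekopaLeindler (volume : Measure (ι → ℝ))) ?_ ?_ ?_ ι
  · intro α β _ e hα
    let _ := Fintype.ofEquiv β e.symm
    refine hα.of_measurePreserving (volume_measurePreserving_piCongrLeft (fun _ => ℝ) e) ?_
    intro x y
    ext b
    obtain ⟨a, rfl⟩ := e.surjective b
    simp [MeasurableEquiv.coe_piCongrLeft, Equiv.piCongrLeft_apply_apply, mul_add]
  · intro f g h hf hg hh H
    have : (volume : Measure (PEmpty → ℝ)) = Measure.dirac 0 := by
      rw [volume_pi, Measure.pi_of_empty]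
      congr 1
      exact Subsingleton.elim _ _
    rw [this, lintegral_dirac, lintegral_dirac, lintegral_dirac]
    simpa using H 0 0
  · intro α _ hα
    refine (hα.prod prekopaLeindler_real).of_measurePreserving
      (e := (MeasurableEquiv.piOptionEquivProd (fun _ : Option α => ℝ)).symm)
      ⟨MeasurableEquiv.measurable _, Measure.pi_map_piOptionEquivProd (fun _ => volume)⟩ ?_
    intro x y
    ext b
    rcases b with _ | b <;> rfl

/-! ### From moment generating functions to variances -/

theorem one_add_sq_div_two_le_cosh (x : ℝ) : 1 + x ^ 2 / 2 ≤ cosh x := by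
  have h1 : |x / 2| ≤ |sinh (x / 2)| := by
    rw [Real.abs_sinh]
    exact Real.self_le_sinh_iff.2 (abs_nonneg _)
  have h2 := sq_le_sq.2 h1
  have h3 := Real.cosh_two_mul (x / 2)
  have h4 := Real.cosh_sq (x / 2)
  rw [mul_div_cancel₀ x two_ne_zero] at h3
  linarith

/-- The left-hand side is the moment generating function of `X - X'`, with `X'` an independent
copy of `X`; comparing the terms of order `t²` as `t → 0` bounds `Var (X - X') = 2 Var X`. -/
theorem variance_le_of_mgf_mul_mgf_neg_le {Ω : Type*} [MeasurableSpace Ω] {P : Measure Ω}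
    [IsProbabilityMeasure P] {X : Ω → ℝ} {s : ℝ}
    (hint : ∀ t, Integrable (fun ω => exp (t * X ω)) P)
    (h : ∀ t, mgf X P t * mgf X P (-t) ≤ exp (t ^ 2 * s)) : variance X P ≤ s := by
  have hset : integrableExpSet X P = Set.univ := by
    ext t; simpa [integrableExpSet] using hint t
  have hX : MemLp X 2 P :=
    memLp_of_mem_interior_integrableExpSet (by simp [hset]) 2
  set Y : Ω × Ω → ℝ := fun p => X p.1 + (-X) p.2 with hY
  have hvar : variance Y (P.prod P) = 2 * variance X P := by
    rw [hY, variance_add_prod hX hX.neg, variance_neg]; ring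
  have hYL : MemLp Y 2 (P.prod P) := (hX.comp_fst P).add (hX.neg.comp_snd P)
  have hmean : ∫ p, Y p ∂(P.prod P) = 0 := by
    rw [hY, integral_add ((hX.integrable (by simp)).comp_fst P)
      ((hX.neg.integrable (by simp)).comp_snd P)]
    rw [integral_fun_fst (μ := P) (ν := P) X, integral_fun_snd (μ := P) (ν := P) (-X)]
    simp [integral_neg]
  have hsq : ∫ p, Y p ^ 2 ∂(P.prod P) = 2 * variance X P := by
    rw [← hvar, variance_eq_sub hYL, hmean]; simp
  have hexp : ∀ t p, exp (t * Y p) = exp (t * X p.1) * exp (-t * X p.2) := by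
    intro t p
    rw [← Real.exp_add]; congr 1; simp [hY]; ring
  have hexpi : ∀ t, Integrable (fun p => exp (t * Y p)) (P.prod P) := by
    intro t
    simp_rw [hexp]
    exact (hint t).mul_prod (hint (-t))
  have hexpv : ∀ t, ∫ p, exp (t * Y p) ∂(P.prod P) = mgf X P t * mgf X P (-t) := by
    intro t
    simp_rw [hexp]
    exact integral_prod_mul (fun ω => exp (t * X ω)) (fun ω => exp (-t * X ω))
  have main : ∀ t, 1 + t ^ 2 * variance X P ≤ exp (t ^ 2 * s) := by
    intro t
    calc 1 + t ^ 2 * variance X P = ∫ p, (1 + t ^ 2 / 2 * Y p ^ 2) ∂(P.prod P) := by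
          rw [integral_add (integrable_const _) (hYL.integrable_sq.const_mul _),
            integral_const_mul, hsq]
          simp; ring
      _ ≤ ∫ p, (1 / 2 * (exp (t * Y p) + exp (-t * Y p))) ∂(P.prod P) := by
          refine integral_mono ((integrable_const _).add (hYL.integrable_sq.const_mul _))
            (((hexpi t).add (hexpi (-t))).const_mul _) fun p => ?_
          have := one_add_sq_div_two_le_cosh (t * Y p)
          rw [Real.cosh_eq] at this
          simp only [neg_mul]
          linarith
      _ ≤ exp (t ^ 2 * s) := by
          rw [integral_const_mul, integral_add (hexpi t) (hexpi (-t)), hexpv, hexpv, neg_neg]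
          linarith [h t, mul_comm (mgf X P t) (mgf X P (-t))]
  -- As `τ = t²` tends to `0`, `(exp (τ s) - 1) / τ` tends to `s`.
  refine le_of_forall_pos_le_add fun ε hε => ?_
  obtain ⟨τ, hτ0, hτ1, hτ2⟩ : ∃ τ : ℝ, 0 < τ ∧ τ * |s| ≤ 1 ∧ τ * s ^ 2 ≤ ε := by
    refine ⟨min (1 / (|s| + 1)) (ε / (s ^ 2 + 1)), by positivity, ?_, ?_⟩
    · calc _ ≤ 1 / (|s| + 1) * |s| := by gcongr; exact min_le_left _ _
        _ ≤ 1 := by rw [one_div_mul_eq_div, div_le_one (by positivity)]; linarith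
    · calc _ ≤ ε / (s ^ 2 + 1) * s ^ 2 := by gcongr; exact min_le_right _ _
        _ ≤ ε := by
          rw [div_mul_eq_mul_div, div_le_iff₀ (by positivity)]; nlinarith
  have h1 := main √τ
  rw [Real.sq_sqrt hτ0.le] at h1
  have h2 := Real.abs_exp_sub_one_sub_id_le (x := τ * s) (by rwa [abs_mul, abs_of_pos hτ0])
  have h3 := (abs_le.1 h2).2
  have : τ * variance X P ≤ τ * (s + ε) := by nlinarith
  exact le_of_mul_le_mul_left this hτ0

theorem variance_eq_of_mgf_eq {Ω : Type*} [MeasurableSpace Ω] {P : Measure Ω}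
    [IsProbabilityMeasure P] {X : Ω → ℝ} {v : ℝ}
    (h : ∀ t, mgf X P t = exp (t ^ 2 * v / 2)) : variance X P = v := by
  have hint : ∀ t, Integrable (fun ω => exp (t * X ω)) P := by
    intro t
    by_contra hn
    have := h t
    rw [mgf, integral_undef hn] at this
    exact (Real.exp_pos _).ne this
  have hset : integrableExpSet X P = Set.univ := by
    ext t; simpa [integrableExpSet] using hint t
  have h0 : (0 : ℝ) ∈ interior (integrableExpSet X P) := by simp [hset]
  have hX : MemLp X 2 P := memLp_of_mem_interior_integrableExpSet h0 2
  have hm : mgf X P = fun t => exp (t ^ 2 * v / 2) := funext h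
  have hd : ∀ t, HasDerivAt (mgf X P) (exp (t ^ 2 * v / 2) * (t * v)) t := by
    intro t
    rw [hm]
    convert! (((hasDerivAt_pow 2 t).mul_const v).div_const 2).exp using 2
    push_cast; ring
  have hd' : deriv (mgf X P) = fun t => exp (t ^ 2 * v / 2) * (t * v) :=
    funext fun t => (hd t).deriv
  have h1 : ∫ ω, X ω ∂P = 0 := by
    rw [← deriv_mgf_zero h0, hd']; simp
  have h2 : ∫ ω, (X ^ 2) ω ∂P = v := by
    have := iteratedDeriv_mgf_zero h0 2
    rw [← this, iteratedDeriv_succ, iteratedDeriv_one, hd']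
    have hd2 := (((((hasDerivAt_pow 2 (0:ℝ)).mul_const v).div_const 2).exp).mul
      ((hasDerivAt_id (0:ℝ)).mul_const v)).deriv
    refine hd2.trans ?_
    simp
  rw [variance_eq_sub hX, h1, h2]; simp

/-! ### Gibbs measures on `ℝ^ι` -/

/-- If the midpoint convexity defect of `H` dominates `t ⟨ν, x - y⟩ - t² s` for every `t`, then
Prékopa–Leindler applied to `exp (-H + t ⟨ν, ·⟩)`, `exp (-H - t ⟨ν, ·⟩)` and
`exp (-H + t² s / 2)` bounds `E[exp (t ⟨ν, h⟩)] E[exp (-t ⟨ν, h⟩)]` by `exp (t² s)`. -/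
theorem variance_le_of_midpoint {ι : Type*} [Fintype ι] {H : (ι → ℝ) → ℝ} (hH : Measurable H)
    {ν : ι → ℝ} {s : ℝ} {P : Measure (ι → ℝ)} [IsProbabilityMeasure P] {c : ℝ≥0∞}
    (hP : P = c • (volume.withDensity fun h => ENNReal.ofReal (exp (-(H h)))))
    (hconv : ∀ x y t, 2 * H ((1 / 2 : ℝ) • (x + y)) + t * ∑ i, ν i * (x - y) i - t ^ 2 * s
      ≤ H x + H y) :
    variance (fun h => ∑ i, ν i * h i) P ≤ s := by
  set X : (ι → ℝ) → ℝ := fun h => ∑ i, ν i * h i with hXdef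
  have hX : Measurable X := by fun_prop
  set L : ℝ → ℝ≥0∞ := fun t => ∫⁻ x, ENNReal.ofReal (exp (t * X x)) ∂P
  set Z : ℝ → ℝ≥0∞ := fun t => ∫⁻ x, ENNReal.ofReal (exp (-(H x) + t * X x))
  have hLZ : ∀ t, L t = c * Z t := by
    intro t
    simp only [L, Z]
    rw [hP, lintegral_smul_measure, smul_eq_mul, lintegral_withDensity_eq_lintegral_mul _
      (by fun_prop) (by fun_prop)]
    congr 1
    refine lintegral_congr fun x => ?_
    rw [Pi.mul_apply, ← ENNReal.ofReal_mul (exp_pos _).le, ← Real.exp_add]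
  have hL0 : c * Z 0 = 1 := by
    rw [← hLZ]; simp [L]
  have hpl : ∀ t, Z t * Z (-t) ≤ (ENNReal.ofReal (exp (t ^ 2 * s / 2)) * Z 0) ^ 2 := by
    intro t
    simp only [Z]
    rw [← lintegral_const_mul' (ENNReal.ofReal (exp (t ^ 2 * s / 2))) _ (by simp)]
    refine prekopaLeindler_pi ι _ _ _ (by fun_prop) (by fun_prop) (by fun_prop) fun x y => ?_
    rw [← ENNReal.ofReal_mul (exp_pos _).le, ← ENNReal.ofReal_mul (exp_pos _).le,
      ← ENNReal.ofReal_pow (by positivity), ← Real.exp_add, ← Real.exp_add, ← Real.exp_nat_mul]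
    refine ENNReal.ofReal_le_ofReal (Real.exp_le_exp.2 ?_)
    have h1 := hconv x y t
    have h2 : ∑ i, ν i * (x - y) i = X x - X y := by
      simp [hXdef, mul_sub]
    rw [h2] at h1
    push_cast
    nlinarith
  have hL : ∀ t, L t * L (-t) ≤ ENNReal.ofReal (exp (t ^ 2 * s)) := by
    intro t
    calc L t * L (-t) = c ^ 2 * (Z t * Z (-t)) := by rw [hLZ, hLZ]; ring
      _ ≤ c ^ 2 * (ENNReal.ofReal (exp (t ^ 2 * s / 2)) * Z 0) ^ 2 := by gcongr; exact hpl t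
      _ = (c * Z 0) ^ 2 * ENNReal.ofReal (exp (t ^ 2 * s / 2)) ^ 2 := by ring
      _ = _ := by
        rw [hL0, one_pow, one_mul, ← ENNReal.ofReal_pow (exp_pos _).le, ← Real.exp_nat_mul]
        congr 2; push_cast; ring
  have hLpos : ∀ t, L t ≠ 0 := by
    intro t h0
    rw [lintegral_eq_zero_iff (by fun_prop)] at h0
    obtain ⟨x, hx⟩ := h0.exists
    simp [not_le.2 (exp_pos _)] at hx
  -- Finiteness of the exponential moments comes for free from the product bound `hL`.
  have hLfin : ∀ t, L t ≠ ⊤ := by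
    intro t ht
    have := hL t
    rw [ht, ENNReal.top_mul (hLpos _)] at this
    simp at this
  have hint : ∀ t, Integrable (fun x => exp (t * X x)) P := fun t =>
    (lintegral_ofReal_ne_top_iff_integrable (by fun_prop)
      (.of_forall fun x => (exp_pos _).le)).1 (hLfin t)
  have hmgf : ∀ t, mgf X P t = (L t).toReal := fun t =>
    integral_eq_lintegral_of_nonneg_ae (.of_forall fun x => (exp_pos _).le) (by fun_prop)
  refine variance_le_of_mgf_mul_mgf_neg_le hint fun t => ?_
  rw [hmgf, hmgf, ← ENNReal.toReal_mul]
  exact ENNReal.toReal_le_of_le_ofReal (exp_pos _).le (hL t)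

/-- For a quadratic `H` whose shift along `g` produces the linear term `⟨ν, ·⟩`, translation
invariance of Lebesgue measure computes the moment generating function of `⟨ν, h⟩` exactly. -/
theorem variance_eq_of_shift {ι : Type*} [Fintype ι] {H : (ι → ℝ) → ℝ} (hH : Measurable H)
    {ν g : ι → ℝ} {v : ℝ} {P : Measure (ι → ℝ)} [IsProbabilityMeasure P] {c : ℝ≥0∞}
    (hP : P = c • (volume.withDensity fun h => ENNReal.ofReal (exp (-(H h)))))
    (hshift : ∀ x t, H (x + t • g) = H x + t * ∑ i, ν i * (x + t • g) i - t ^ 2 * v / 2) :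
    variance (fun h => ∑ i, ν i * h i) P = v := by
  set X : (ι → ℝ) → ℝ := fun h => ∑ i, ν i * h i with hXdef
  have hX : Measurable X := by fun_prop
  refine variance_eq_of_mgf_eq fun t => ?_
  have h1 : mgf X P t = (∫⁻ x, ENNReal.ofReal (exp (t * X x)) ∂P).toReal :=
    integral_eq_lintegral_of_nonneg_ae (.of_forall fun x => (exp_pos _).le) (by fun_prop)
  have hone : c * ∫⁻ x, ENNReal.ofReal (exp (-(H x))) = 1 := by
    have : P Set.univ = 1 := measure_univ
    rw [hP] at this
    simpa using this
  have h2 : ∫⁻ x, ENNReal.ofReal (exp (t * X x)) ∂P = ENNReal.ofReal (exp (t ^ 2 * v / 2)) := by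
    rw [hP, lintegral_smul_measure, smul_eq_mul, lintegral_withDensity_eq_lintegral_mul _
      (by fun_prop) (by fun_prop), ← lintegral_add_right_eq_self _ (t • g)]
    calc _ = c * ∫⁻ x, ENNReal.ofReal (exp (t ^ 2 * v / 2)) * ENNReal.ofReal (exp (-(H x))) := by
          congr 1
          refine lintegral_congr fun x => ?_
          rw [Pi.mul_apply, ← ENNReal.ofReal_mul (exp_pos _).le,
            ← ENNReal.ofReal_mul (exp_pos _).le, ← Real.exp_add, ← Real.exp_add, hshift]
          congr 2; ring
      _ = ENNReal.ofReal (exp (t ^ 2 * v / 2)) *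
            (c * ∫⁻ x, ENNReal.ofReal (exp (-(H x)))) := by
          rw [lintegral_const_mul' _ _ (by simp)]; ring
      _ = _ := by rw [hone, mul_one]
  rw [h1, h2, ENNReal.toReal_ofReal (exp_pos _).le]

/-! ### The Dirichlet form and the energies on the graph -/

theorem gvee_sub {α : Type*} [DecidableEq α] (B : Finset α) (x y : {x // x ∉ B} → ℝ)
    (φ ψ : α → ℝ) : gvee B (x - y) (φ - ψ) = gvee B x φ - gvee B y ψ := by
  ext a; by_cases h : a ∈ B <;> simp [gvee, h]

theorem gvee_add {α : Type*} [DecidableEq α] (B : Finset α) (x y : {x // x ∉ B} → ℝ)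
    (φ ψ : α → ℝ) : gvee B (x + y) (φ + ψ) = gvee B x φ + gvee B y ψ := by
  ext a; by_cases h : a ∈ B <;> simp [gvee, h]

theorem gvee_smul {α : Type*} [DecidableEq α] (B : Finset α) (c : ℝ) (x : {x // x ∉ B} → ℝ)
    (φ : α → ℝ) : gvee B (c • x) (c • φ) = c • gvee B x φ := by
  ext a; by_cases h : a ∈ B <;> simp [gvee, h]

/-- The gradient along the oriented pair `(a, b)` of a field extended by zero on the boundary,
as a linear functional of the field. -/
def gradEdge {α : Type*} [DecidableEq α] (B : Finset α) (a b : α) :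
    ({x // x ∉ B} → ℝ) →ₗ[ℝ] ℝ where
  toFun h := gvee B h 0 b - gvee B h 0 a
  map_add' x y := by
    have := gvee_add B x y 0 0
    rw [add_zero] at this
    simp only [this, Pi.add_apply]; ring
  map_smul' c x := by
    have := gvee_smul B c x 0
    rw [smul_zero] at this
    simp only [this, Pi.smul_apply, smul_eq_mul, RingHom.id_apply]; ring

/-- The Dirichlet form `∑_{b ∈ E} ∇g(b) ∇h(b)` of fields extended by zero on the boundary; the
factor `1 / 2` compensates for summing over ordered pairs. -/
def dirichlet {α : Type*} [Fintype α] [DecidableEq α] (G : SimpleGraph α) [DecidableRel G.Adj]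
    (B : Finset α) : ({x // x ∉ B} → ℝ) →ₗ[ℝ] ({x // x ∉ B} → ℝ) →ₗ[ℝ] ℝ :=
  (1 / 2 : ℝ) • ∑ a : α, ∑ b : α,
    if G.Adj a b then (LinearMap.mul ℝ ℝ).compl₁₂ (gradEdge B a b) (gradEdge B a b) else 0

section
variable {α : Type*} [Fintype α] [DecidableEq α] (G : SimpleGraph α) [DecidableRel G.Adj]
    (B : Finset α)

theorem dirichlet_apply (g h : {x // x ∉ B} → ℝ) : dirichlet G B g h =
    (1 / 2) * ∑ a : α, ∑ b : α,
      if G.Adj a b then gradEdge B a b g * gradEdge B a b h else 0 := by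
  simp only [dirichlet, LinearMap.smul_apply, LinearMap.sum_apply, smul_eq_mul]
  congr 1
  refine Finset.sum_congr rfl fun a _ => Finset.sum_congr rfl fun b _ => ?_
  split_ifs <;> simp

theorem dirichlet_comm (g h : {x // x ∉ B} → ℝ) : dirichlet G B g h = dirichlet G B h g := by
  simp only [dirichlet_apply, mul_comm]

theorem dirichlet_self_nonneg (h : {x // x ∉ B} → ℝ) : 0 ≤ dirichlet G B h h := by
  rw [dirichlet_apply]
  refine mul_nonneg (by norm_num) (Finset.sum_nonneg fun a _ => Finset.sum_nonneg fun b _ => ?_)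
  split_ifs
  exacts [mul_self_nonneg _, le_rfl]

theorem graphDGFFEnergy_eq (h : {x // x ∉ B} → ℝ) :
    graphDGFFEnergy G B (fun _ _ => 1) (fun _ => 0) h = (1 / 2) * dirichlet G B h h := by
  rw [dirichlet_apply, graphDGFFEnergy, ← mul_assoc]
  congr 1
  · norm_num
  · refine Finset.sum_congr rfl fun a _ => Finset.sum_congr rfl fun b _ => ?_
    simp only [one_mul, sq]; rfl

variable {G B} in
theorem eq_zero_of_dirichlet_self_eq_zero (hG : G.Connected) (hB : B.Nonempty)
    {h : {x // x ∉ B} → ℝ} (h0 : dirichlet G B h h = 0) : h = 0 := by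
  have hadj : ∀ a b, G.Adj a b → gvee B h 0 a = gvee B h 0 b := by
    intro a b hab
    rw [dirichlet_apply] at h0
    have hnn : ∀ a b : α, 0 ≤ if G.Adj a b then gradEdge B a b h * gradEdge B a b h else 0 := by
      intro a b
      split_ifs
      exacts [mul_self_nonneg _, le_rfl]
    have h1 := (mul_eq_zero.1 h0).resolve_left (by norm_num)
    rw [Finset.sum_eq_zero_iff_of_nonneg fun a _ => Finset.sum_nonneg fun b _ => hnn a b] at h1
    have h2 := h1 a (Finset.mem_univ _)
    rw [Finset.sum_eq_zero_iff_of_nonneg fun b _ => hnn a b] at h2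
    have h3 := h2 b (Finset.mem_univ _)
    rw [if_pos hab, mul_self_eq_zero] at h3
    exact (sub_eq_zero.1 h3).symm
  have hreach : ∀ a b, G.Reachable a b → gvee B h 0 a = gvee B h 0 b := by
    rintro a b ⟨w⟩
    induction w with
    | nil => rfl
    | cons hab _ ih => exact (hadj _ _ hab).trans ih
  obtain ⟨z, hz⟩ := hB
  ext ⟨x, hx⟩
  have := hreach x z (hG.preconnected x z)
  simpa [gvee, hx, hz] using this

variable {G B} in
/-- The Dirichlet form is definite, so every linear functional `⟨ν, ·⟩` is represented by some
`g` (namely `g = (-Δ)⁻¹ ν`). -/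
theorem exists_dirichlet_eq (hG : G.Connected) (hB : B.Nonempty) (ν : {x // x ∉ B} → ℝ) :
    ∃ g, ∀ h, dirichlet G B g h = ∑ x, ν x * h x := by
  have hinj : Function.Injective (dirichlet G B) := by
    rw [← LinearMap.ker_eq_bot, LinearMap.ker_eq_bot']
    intro g hg
    exact eq_zero_of_dirichlet_self_eq_zero hG hB (by rw [hg]; rfl)
  have hsurj := (LinearMap.injective_iff_surjective_of_finrank_eq_finrank
    (Subspace.dual_finrank_eq (K := ℝ) (V := {x // x ∉ B} → ℝ)).symm).1 hinj
  obtain ⟨g, hg⟩ := hsurj (∑ x, ν x • LinearMap.proj x)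
  exact ⟨g, fun h => by rw [hg]; simp⟩

theorem measurable_gvee {α : Type*} [DecidableEq α] (B : Finset α) (ψ : α → ℝ) (a : α) :
    Measurable fun h => gvee B h ψ a := by
  unfold gvee
  split_ifs <;> fun_prop

theorem measurable_graphGLEnergy {V : ℝ → ℝ} (hV : Measurable V) (ψ : α → ℝ) :
    Measurable (graphGLEnergy V G B ψ) := by
  unfold graphGLEnergy
  refine Measurable.const_mul (Finset.measurable_sum _ fun a _ =>
    Finset.measurable_sum _ fun b _ => ?_) _
  split_ifs
  · exact hV.comp ((measurable_gvee B ψ b).sub (measurable_gvee B ψ a))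
  · exact measurable_const

theorem measurable_graphDGFFEnergy (w : α → α → ℝ) (φ : α → ℝ) :
    Measurable (graphDGFFEnergy G B w φ) := by
  unfold graphDGFFEnergy
  refine Measurable.const_mul (Finset.measurable_sum _ fun a _ =>
    Finset.measurable_sum _ fun b _ => ?_) _
  split_ifs
  · exact (((measurable_gvee B φ b).sub (measurable_gvee B φ a)).pow_const 2).const_mul _
  · exact measurable_const

/-- `V` minus the parabola `a x² / 2` is convex, hence midpoint convex. -/
theorem midpoint_potential {V : ℝ → ℝ} {a : ℝ} (hV : ContDiff ℝ 2 V)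
    (ha : ∀ x, a ≤ deriv (deriv V) x) (p q : ℝ) :
    2 * V ((1 / 2) * (p + q)) + a / 4 * (p - q) ^ 2 ≤ V p + V q := by
  have hd : Differentiable ℝ V := hV.differentiable (by norm_num)
  have hd1 : ContDiff ℝ 1 (deriv V) := (contDiff_succ_iff_deriv (n := 1)).1 hV |>.2.2
  have hd' : Differentiable ℝ (deriv V) := hd1.differentiable (by norm_num)
  have e1 : deriv (fun x => V x - a / 2 * x ^ 2) = fun x => deriv V x - a * x := by
    ext x
    have := ((hd x).hasDerivAt.sub ((hasDerivAt_pow 2 x).const_mul (a / 2))).deriv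
    refine this.trans ?_
    push_cast; ring
  have e2 : deriv (fun x => deriv V x - a * x) = fun x => deriv (deriv V) x - a := by
    ext x
    have := ((hd' x).hasDerivAt.sub ((hasDerivAt_id x).const_mul a)).deriv
    refine this.trans ?_
    ring
  have hc : ConvexOn ℝ Set.univ fun x => V x - a / 2 * x ^ 2 := by
    refine convexOn_univ_of_deriv2_nonneg (by fun_prop) (by rw [e1]; fun_prop) fun x => ?_
    simp only [Function.iterate_succ, Function.iterate_zero, Function.comp, id]
    rw [e1, e2]
    linarith [ha x]
  have := hc.2 (Set.mem_univ p) (Set.mem_univ q) (show (0 : ℝ) ≤ 1 / 2 by norm_num)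
    (show (0 : ℝ) ≤ 1 / 2 by norm_num) (by norm_num)
  simp only [smul_eq_mul, ← mul_add] at this
  nlinarith

/-- Summing `midpoint_potential` over the edges; the boundary values cancel in `x - y`, so the
defect is a Dirichlet form with zero boundary condition, whatever `ψ` is. -/
theorem midpoint_energy {V : ℝ → ℝ} {a : ℝ} (hV : ContDiff ℝ 2 V)
    (ha : ∀ x, a ≤ deriv (deriv V) x) (ψ : α → ℝ) (x y : {x // x ∉ B} → ℝ) :
    2 * graphGLEnergy V G B ψ ((1 / 2 : ℝ) • (x + y)) + a / 4 * dirichlet G B (x - y) (x - y)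
      ≤ graphGLEnergy V G B ψ x + graphGLEnergy V G B ψ y := by
  have hm : gvee B ((1 / 2 : ℝ) • (x + y)) ψ = (1 / 2 : ℝ) • (gvee B x ψ + gvee B y ψ) := by
    rw [← gvee_add, ← gvee_smul]
    congr 1; ext; simp; ring
  have hs : gvee B (x - y) 0 = gvee B x ψ - gvee B y ψ := by
    rw [← gvee_sub, sub_self]
  have key : ∀ u v : α, 2 * (if G.Adj u v then V (gvee B ((1 / 2 : ℝ) • (x + y)) ψ v
        - gvee B ((1 / 2 : ℝ) • (x + y)) ψ u) else 0) + a / 4 *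
        (if G.Adj u v then gradEdge B u v (x - y) * gradEdge B u v (x - y) else 0) ≤
      (if G.Adj u v then V (gvee B x ψ v - gvee B x ψ u) else 0) +
      (if G.Adj u v then V (gvee B y ψ v - gvee B y ψ u) else 0) := by
    intro u v
    split_ifs
    · have h1 := midpoint_potential hV ha (gvee B x ψ v - gvee B x ψ u)
        (gvee B y ψ v - gvee B y ψ u)
      have h2 : gradEdge B u v (x - y) = (gvee B x ψ v - gvee B x ψ u) -
          (gvee B y ψ v - gvee B y ψ u) := by
        change gvee B (x - y) 0 v - gvee B (x - y) 0 u = _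
        rw [hs]; simp only [Pi.sub_apply]; ring
      rw [h2, hm, ← sq]
      convert h1 using 4
      simp; ring
    · simp
  have := Finset.sum_le_sum fun u (_ : u ∈ Finset.univ) =>
    Finset.sum_le_sum fun v (_ : v ∈ Finset.univ) => key u v
  simp only [Finset.sum_add_distrib, ← Finset.mul_sum] at this
  simp only [graphGLEnergy, dirichlet_apply]
  linarith

end

/-- Brascamp–Lieb variance inequality.
There is `C > 0` depending only on `a_V, A_V` such that for every finite connected graph
`G = (V ∪ ∂V, E)` with `∂V ≠ ∅`, every boundary condition `ψ` and every `ν ∈ ℝ^V`, the variance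
of `⟨ν, h⟩` under the GL measure `P^ψ` is at most `C` times the variance of `⟨ν, h*⟩` under the
zero-boundary unit-weight DGFF. -/
theorem brascamp_lieb_variance (aV AV : ℝ) (haV : 0 < aV) :
    ∃ C : ℝ, 0 < C ∧
      ∀ (V : ℝ → ℝ), ContDiff ℝ 2 V → (∀ x, V (-x) = V x) →
        (∀ x, aV ≤ deriv (deriv V) x) → (∀ x, deriv (deriv V) x ≤ AV) →
      ∀ (α : Type) [Fintype α] [DecidableEq α] (G : SimpleGraph α) [DecidableRel G.Adj],
        G.Connected →
      ∀ (B : Finset α), B.Nonempty →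
      ∀ (ψ : α → ℝ) (ν : {x // x ∉ B} → ℝ) (P Pstar : Measure ({x // x ∉ B} → ℝ)),
        IsGraphGL V G B ψ P →
        IsGraphDGFF G B (fun _ _ => 1) (fun _ => 0) Pstar →
        variance (fun h => ∑ x, ν x * h x) P ≤ C * variance (fun h => ∑ x, ν x * h x) Pstar := by
  refine ⟨aV⁻¹, inv_pos.2 haV, ?_⟩
  intro V hV _ hVa _ α _ _ G _ hG B hB ψ ν P Pstar ⟨hP, c, _, _, hPc⟩ ⟨hPs, c', _, _, hPsc⟩
  obtain ⟨g, hg⟩ := exists_dirichlet_eq hG hB ν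
  have hstar : variance (fun h => ∑ x, ν x * h x) Pstar = dirichlet G B g g := by
    refine variance_eq_of_shift (measurable_graphDGFFEnergy G B _ _) hPsc (g := g) fun x t => ?_
    rw [graphDGFFEnergy_eq, graphDGFFEnergy_eq, ← hg]
    simp only [map_add, map_smul, LinearMap.add_apply, LinearMap.smul_apply, smul_eq_mul,
      dirichlet_comm G B x g]
    ring
  rw [hstar]
  refine variance_le_of_midpoint (measurable_graphGLEnergy G B hV.continuous.measurable ψ) hPc
    fun x y t => ?_
  have h1 := midpoint_energy G B hV hVa ψ x y
  -- The choice of `g`-multiple completes the square in `(a/4) ℰ(d, d) - t ⟨ν, d⟩`.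
  have h2 := dirichlet_self_nonneg G B ((x - y) - (2 * t / aV) • g)
  rw [← hg]
  generalize x - y = d at *
  simp only [map_sub, map_smul, LinearMap.sub_apply, LinearMap.smul_apply, smul_eq_mul,
    dirichlet_comm G B d g] at h2
  have h3 : 0 ≤ aV / 4 * dirichlet G B d d - t * dirichlet G B g d
      + t ^ 2 * (aV⁻¹ * dirichlet G B g g) := by
    refine (mul_nonneg (by positivity : 0 ≤ aV / 4) h2).trans_eq ?_
    field_simp
    ring
  linarith

end
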